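/- For every real number u with 0 ≤ u ≤ 1, the series f₁(u) := ∑_{k=1}^∞ (−1)^k c(k) (u² − 1)^k / k converges and equals −2·(log(u + 1) − log 2). -/

import Mathlib

/-!
Write `F u = ∑ c (k+1) (1 - u²)^(k+1) / (k+1)`; the signs in the series cancel, so `F` is the
function to evaluate, and `F 1 = 0`. The identity `c k - c (k+1) = c k / (2k+2)` makes
`∑ c (k+1) / (k+1)` a series dominated by a telescoping one, so the series for `F` converges
uniformly and `F` is continuous on the whole of `[0, 1]`, including the endpoint `u = 0`, where
`1 - u²` lies on the circle of convergence. Inside `(0, 1)` the series may be differentiated termwise, and the binomial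
series `∑ c k x^k = (1 - x)^(-1/2)` at `x = 1 - u²` gives `F' u = -2 / (1 + u)`. The mean value
theorem applied to `F u + 2 log (1 + u)` on `[u, 1]` concludes.
-/

/-- `c k = |binom(-1/2, k)| = binom(2k, k) / 4^k`, so `binom(-1/2,k) = (-1)^k c(k)`. -/
noncomputable def c (k : ℕ) : ℝ := (Nat.choose (2 * k) k : ℝ) / 4 ^ k

open Set

lemma c_zero : c 0 = 1 := by simp [c]

lemma c_nonneg (k : ℕ) : 0 ≤ c k := by unfold c; positivity

lemma c_succ (k : ℕ) : 2 * (k + 1 : ℝ) * c (k + 1) = (2 * k + 1) * c k := by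
  have h := Nat.succ_mul_centralBinom_succ k
  simp only [Nat.centralBinom_eq_two_mul_choose] at h
  have h' : (k + 1 : ℝ) * ((2 * (k + 1)).choose (k + 1) : ℝ)
      = 2 * (2 * k + 1) * ((2 * k).choose k : ℝ) := by exact_mod_cast h
  unfold c
  rw [pow_succ]
  field_simp
  linear_combination 2 * h'

lemma c_le_one (k : ℕ) : c k ≤ 1 := by
  unfold c
  rw [div_le_one (by positivity), ← Nat.centralBinom_eq_two_mul_choose]
  exact_mod_cast Nat.centralBinom_le_four_pow k

/-- Since `c (k+1) / (k+1) ≤ 2 (c k - c (k+1))`, the partial sums are bounded by `2 * c 0`. -/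
lemma summable_c_div : Summable (fun k : ℕ => c (k + 1) / (k + 1 : ℝ)) := by
  have hb : ∀ n : ℕ, ∑ k ∈ Finset.range n, c (k + 1) / (k + 1 : ℝ) ≤ 2 - 2 * c n := by
    intro n
    induction n with
    | zero => simp [c_zero]
    | succ n ih =>
      rw [Finset.sum_range_succ]
      have h1 : c (n + 1) / (n + 1 : ℝ) ≤ 2 * c n - 2 * c (n + 1) := by
        rw [div_le_iff₀ (by positivity)]
        have := c_succ n
        have := c_nonneg n
        have := c_nonneg (n + 1)
        nlinarith
      linarith
  refine summable_of_sum_range_le (c := 2) (fun k => div_nonneg (c_nonneg _) (by positivity)) ?_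
  intro n
  linarith [hb n, c_nonneg n]

/-- Both sides, multiplied by `k!`, are the rising factorial `(1/2)(3/2)⋯(k - 1/2)`. -/
lemma choose_half (k : ℕ) : Ring.choose ((1 / 2 : ℝ) + k - 1) k = c k := by
  rw [← Ring.multichoose_eq]
  have h := Ring.factorial_nsmul_multichoose_eq_ascPochhammer (1 / 2 : ℝ) k
  rw [Polynomial.ascPochhammer_smeval_eq_eval, nsmul_eq_mul] at h
  have h2 : (k.factorial : ℝ) * c k = (ascPochhammer ℝ k).eval (1 / 2 : ℝ) := by
    clear h
    induction k with
    | zero => simp [c_zero]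
    | succ n ih =>
      rw [ascPochhammer_succ_eval, ← ih, Nat.factorial_succ]
      push_cast
      linear_combination (n.factorial : ℝ) / 2 * c_succ n
  have h3 : (k.factorial : ℝ) ≠ 0 := by positivity
  exact mul_left_cancel₀ h3 (h.trans h2.symm)

/-- The binomial series for `(1 - x)^(-1/2)` at `x = 1 - u²`. -/
lemma hasSum_c (u : ℝ) (h0 : 0 < u) (h1 : u < 1) :
    HasSum (fun k : ℕ => c k * (1 - u ^ 2) ^ k) (1 / u) := by
  have h := Real.one_div_one_sub_rpow_hasFPowerSeriesOnBall_zero (1 / 2)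
  have hm : (1 - u ^ 2) ∈ Metric.eball (0 : ℝ) 1 := by
    rw [← ENNReal.ofReal_one, Metric.eball_ofReal, Metric.mem_ball, dist_zero_right,
      Real.norm_eq_abs, abs_lt]
    constructor <;> nlinarith
  have h2 := h.hasSum hm
  simp only [zero_add, FormalMultilinearSeries.ofScalars_apply_eq, choose_half, smul_eq_mul,
    sub_sub_cancel] at h2
  rwa [← Real.sqrt_eq_rpow, Real.sqrt_sq h0.le] at h2

/-- Dropping the constant term of the binomial series and dividing by `1 - u²`. -/
lemma hasSum_c_succ (u : ℝ) (h0 : 0 < u) (h1 : u < 1) :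
    HasSum (fun k : ℕ => -2 * u * (c (k + 1) * (1 - u ^ 2) ^ k)) (-2 / (1 + u)) := by
  have hx : 1 - u ^ 2 ≠ 0 := by nlinarith
  have h := (hasSum_nat_add_iff' 1).2 (hasSum_c u h0 h1)
  have h2 := h.mul_left (-2 * u / (1 - u ^ 2))
  have e1 : -2 * u / (1 - u ^ 2) * (1 / u - ∑ i ∈ Finset.range 1, c i * (1 - u ^ 2) ^ i)
      = -2 / (1 + u) := by
    simp only [Finset.range_one, Finset.sum_singleton, c_zero, pow_zero]
    have : 1 + u ≠ 0 := by positivity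
    field_simp
    ring
  rw [e1] at h2
  refine h2.congr_fun fun k => ?_
  rw [pow_succ]
  field_simp
  ring

lemma term_bound {y : ℝ} (hy : y ∈ Icc (0 : ℝ) 1) (k : ℕ) :
    ‖c (k + 1) * (1 - y ^ 2) ^ (k + 1) / (k + 1 : ℝ)‖ ≤ c (k + 1) / (k + 1 : ℝ) := by
  have ha : 0 ≤ 1 - y ^ 2 := by nlinarith [hy.1, hy.2]
  have hb : 1 - y ^ 2 ≤ 1 := by nlinarith [hy.1, hy.2]
  have hc := c_nonneg (k + 1)
  rw [Real.norm_of_nonneg (by positivity)]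
  gcongr
  exact mul_le_of_le_one_right hc (pow_le_one₀ ha hb)

/-- Termwise differentiation, valid locally uniformly on `(0, 1)`. -/
lemma hasDerivAt_F {y : ℝ} (h0 : 0 < y) (h1 : y < 1) :
    HasDerivAt (fun u : ℝ => ∑' k : ℕ, c (k + 1) * (1 - u ^ 2) ^ (k + 1) / (k + 1 : ℝ))
      (-2 / (1 + y)) y := by
  rw [← (hasSum_c_succ y h0 h1).tsum_eq]
  have hr : Summable (fun k : ℕ => 2 * (1 - (y / 2) ^ 2) ^ k) :=
    (summable_geometric_of_lt_one (by nlinarith) (by nlinarith)).mul_left 2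
  have hy : y ∈ Ioo (y / 2) 1 := ⟨by linarith, h1⟩
  -- The geometric bound on the derivatives needs `z` to stay away from `0`: hence `(y / 2, 1)`.
  refine hasDerivAt_tsum_of_isPreconnected
    (g' := fun k z => -2 * z * (c (k + 1) * (1 - z ^ 2) ^ k)) hr isOpen_Ioo
    isPreconnected_Ioo ?_ ?_ hy ?_ hy
  · intro k z _
    have h := (((((hasDerivAt_id z).pow 2).const_sub 1).pow (k + 1)).const_mul
      (c (k + 1))).div_const (k + 1 : ℝ)
    refine h.congr_deriv ?_
    simp
    field_simp
  · intro k z hz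
    have hz0 : 0 < z := by linarith [hz.1]
    have ha : 0 ≤ 1 - z ^ 2 := by nlinarith [hz.2]
    have hb : 1 - z ^ 2 ≤ 1 - (y / 2) ^ 2 := by nlinarith [hz.1]
    have hc := c_nonneg (k + 1)
    rw [norm_mul, Real.norm_of_nonneg (by positivity : 0 ≤ c (k + 1) * (1 - z ^ 2) ^ k),
      Real.norm_eq_abs, abs_mul, abs_of_pos hz0]
    have e : c (k + 1) * (1 - z ^ 2) ^ k ≤ 1 * (1 - (y / 2) ^ 2) ^ k := by
      gcongr
      exact c_le_one _
    have e2 : |(-2 : ℝ)| * z ≤ 2 := by norm_num; linarith [hz.2]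
    calc _ ≤ 2 * (1 * (1 - (y / 2) ^ 2) ^ k) := by gcongr
      _ = _ := by ring
  · exact .of_norm_bounded summable_c_div (term_bound ⟨h0.le, h1.le⟩)

/-- For `0 ≤ u ≤ 1`, the series `f₁(u) = ∑_{k=1}^∞ (-1)^k c(k) (u² - 1)^k / k`
converges and equals `-2·(log(u + 1) - log 2)`. -/
theorem f_one_eval (u : ℝ) (h0 : 0 ≤ u) (h1 : u ≤ 1) :
    HasSum (fun k : ℕ => (-1 : ℝ) ^ (k + 1) * c (k + 1) * (u ^ 2 - 1) ^ (k + 1) / (k + 1 : ℝ))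
      (-2 * (Real.log (u + 1) - Real.log 2)) := by
  have hterm : (fun k : ℕ => (-1 : ℝ) ^ (k + 1) * c (k + 1) * (u ^ 2 - 1) ^ (k + 1) / (k + 1 : ℝ))
      = fun k : ℕ => c (k + 1) * (1 - u ^ 2) ^ (k + 1) / (k + 1 : ℝ) := by
    ext k
    rw [show 1 - u ^ 2 = (-1) * (u ^ 2 - 1) by ring, mul_pow]
    ring
  rw [hterm]
  have hsum : Summable fun k : ℕ => c (k + 1) * (1 - u ^ 2) ^ (k + 1) / (k + 1 : ℝ) :=
    .of_norm_bounded summable_c_div (term_bound ⟨h0, h1⟩)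
  set F : ℝ → ℝ := fun u => ∑' k : ℕ, c (k + 1) * (1 - u ^ 2) ^ (k + 1) / (k + 1 : ℝ) with hF
  have hF1 : F 1 = 0 := by simp [hF]
  have hcont : ContinuousOn F (Icc 0 1) :=
    continuousOn_tsum (fun k => by fun_prop) summable_c_div (fun k y hy => term_bound hy k)
  suffices h : F u = -2 * (Real.log (u + 1) - Real.log 2) by
    rw [← h]
    exact hsum.hasSum
  rcases h1.eq_or_lt with rfl | hlt
  · rw [hF1]
    norm_num
  have hcG : ContinuousOn (fun x => F x + 2 * Real.log (x + 1)) (Icc u 1) := by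
    refine (hcont.mono (Icc_subset_Icc_left h0)).add (continuousOn_const.mul ?_)
    refine ContinuousOn.log (by fun_prop) ?_
    intro x hx
    linarith [hx.1]
  obtain ⟨z, hz, hslope⟩ := exists_hasDerivAt_eq_slope (fun x => F x + 2 * Real.log (x + 1))
    (fun x => -2 / (1 + x) + 2 * (1 / (x + 1))) hlt hcG (by
      intro x hx
      have hx0 : 0 < x := h0.trans_lt hx.1
      exact (hasDerivAt_F hx0 hx.2).add
        ((((hasDerivAt_id x).add_const 1).log (by simp; linarith)).const_mul 2))
  have hz0 : 0 < z := h0.trans_lt hz.1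
  have hzero : -2 / (1 + z) + 2 * (1 / (z + 1)) = 0 := by
    field_simp
    ring
  have hne : 1 - u ≠ 0 := by linarith
  rw [hzero, eq_comm, div_eq_zero_iff, or_iff_left hne, hF1,
    show (1 : ℝ) + 1 = 2 by norm_num] at hslope
  linarith
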